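/- arXiv:2309.10384 — 2 statements merged into one kernel-verified Lean document; each statement's English description precedes it below -/
import Mathlib

section
/- Let k > 0 and define K_k(s) = (cosh s)^{1/2−k} if 0 < k < 1/2, K_k(s) = ⟨s⟩ if k = 1/2, and K_k(s) = 1 if k > 1/2. There exists a constant N_k > 0 such that for all t > r ≥ 0 with t − r ≥ 1: ∫_0^{t−r} (cosh λ)^{−k−1/2} sinh λ · (cosh t − cosh(r+λ))^{−1/2} dλ ≤ N_k (cosh r)^{−1/2} (cosh(t−r))^{−1/2} K_k(t−r). -/
open MeasureTheory intervalIntegral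

/-- The factor `K_k(s)`: `(cosh s)^{1/2-k}` for `0 < k < 1/2`, `⟨s⟩` for `k = 1/2`,
and `1` for `k > 1/2`. -/
noncomputable def Kfac (k s : ℝ) : ℝ :=
  if k < 1 / 2 then Real.cosh s ^ (1 / 2 - k : ℝ)
  else if k = 1 / 2 then Real.sqrt (1 + s ^ 2)
  else 1

/-!
Put `s = t - r`. Since `sinh` is increasing, the addition formula gives
`cosh t - cosh (r + l) ≥ cosh r * (cosh s - cosh l)` for `0 ≤ l ≤ s`, which splits off the factor
`(cosh r)^{-1/2}`. With `u = cosh l` and `S = cosh s`, what remains is the incomplete Beta integral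
`∫_1^S u^a (S - u)^b du`, where `a = -k - 1/2` and `b = -1/2`. At every `u` one of `u`, `S - u` is
at least `S / 2`, and the corresponding factor is then comparable with the same power of `S`.
The integral is therefore at most a multiple of `S^b ∫_1^S u^a du + S^{a + b + 1}`. The three cases
of `K_k` are the three growth rates of `∫_1^S u^a du`, and the second term
`S^{a + b + 1} = S^{-k}` is at most `S^{-1/2} K_k(s)`.
-/

open Real Set

section BetaIntegral

variable {S c : ℝ}

lemma rpow_le_two_rpow_abs_mul_rpow {u : ℝ} (hS : 0 < S) (hu : S / 2 ≤ u) (huS : u ≤ S) (a : ℝ) :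
    u ^ a ≤ 2 ^ |a| * S ^ a := by
  have hu0 : 0 ≤ u := by linarith
  rcases le_total 0 a with ha | ha
  · calc u ^ a ≤ S ^ a := rpow_le_rpow hu0 huS ha
      _ ≤ 2 ^ |a| * S ^ a :=
        le_mul_of_one_le_left (by positivity) (one_le_rpow one_le_two (abs_nonneg a))
  · calc u ^ a ≤ (S / 2) ^ a := rpow_le_rpow_of_nonpos (half_pos hS) hu ha
      _ = 2 ^ |a| * S ^ a := by
        rw [div_rpow hS.le zero_le_two, abs_of_nonpos ha, rpow_neg zero_le_two, div_eq_inv_mul]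

lemma rpow_mul_sub_rpow_le {u : ℝ} (hS : 0 < S) (hu : 0 ≤ u) (huS : u ≤ S) (a b : ℝ) :
    u ^ a * (S - u) ^ b ≤ 2 ^ |b| * S ^ b * u ^ a + 2 ^ |a| * S ^ a * (S - u) ^ b := by
  have : 0 ≤ S - u := sub_nonneg.2 huS
  rcases le_total u (S / 2) with h | h
  · calc u ^ a * (S - u) ^ b ≤ u ^ a * (2 ^ |b| * S ^ b) := by
          gcongr
          exact rpow_le_two_rpow_abs_mul_rpow hS (by linarith) (by linarith) b
      _ = 2 ^ |b| * S ^ b * u ^ a := mul_comm _ _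
      _ ≤ _ := le_add_of_nonneg_right (by positivity)
  · calc u ^ a * (S - u) ^ b ≤ 2 ^ |a| * S ^ a * (S - u) ^ b := by
          gcongr
          exact rpow_le_two_rpow_abs_mul_rpow hS h huS a
      _ ≤ _ := le_add_of_nonneg_left (by positivity)

lemma intervalIntegrable_sub_rpow {b : ℝ} (hb : -1 < b) (S c d : ℝ) :
    IntervalIntegrable (fun u ↦ (S - u) ^ b) volume c d := by
  simpa using (intervalIntegrable_rpow' (a := S - c) (b := S - d) hb).comp_sub_left S

lemma integral_sub_rpow {b : ℝ} (hb : -1 < b) (S c : ℝ) :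
    ∫ u in c..S, (S - u) ^ b = (S - c) ^ (b + 1) / (b + 1) := by
  rw [integral_comp_sub_left (fun v ↦ v ^ b), integral_rpow (.inl hb), sub_self,
    zero_rpow (by linarith), sub_zero]

lemma intervalIntegrable_rpow_of_pos (hc : 0 < c) (hS : 0 < S) (a : ℝ) :
    IntervalIntegrable (fun u ↦ u ^ a) volume c S :=
  intervalIntegrable_rpow (.inr (notMem_uIcc_of_lt hc hS))

lemma intervalIntegrable_rpow_mul_sub_rpow {b : ℝ} (hc : 0 < c) (hcS : c ≤ S) (hb : -1 < b)
    (a : ℝ) : IntervalIntegrable (fun u ↦ u ^ a * (S - u) ^ b) volume c S := by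
  have hS : 0 < S := hc.trans_le hcS
  refine (((intervalIntegrable_rpow_of_pos hc hS a).const_mul (2 ^ |b| * S ^ b)).add
    ((intervalIntegrable_sub_rpow hb S c S).const_mul (2 ^ |a| * S ^ a))).mono_fun'
    (by fun_prop) ((ae_restrict_mem measurableSet_uIoc).mono fun u hu ↦ ?_)
  rw [uIoc_of_le hcS] at hu
  have hu0 : 0 ≤ u := (hc.trans hu.1).le
  have hnonneg : 0 ≤ u ^ a * (S - u) ^ b :=
    mul_nonneg (rpow_nonneg hu0 a) (rpow_nonneg (sub_nonneg.2 hu.2) b)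
  exact (norm_of_nonneg hnonneg).trans_le (rpow_mul_sub_rpow_le hS hu0 hu.2 a b)

lemma integral_rpow_mul_sub_rpow_le {b : ℝ} (hc : 0 < c) (hcS : c ≤ S) (hb : -1 < b) (a : ℝ) :
    ∫ u in c..S, u ^ a * (S - u) ^ b ≤
      2 ^ |b| * S ^ b * (∫ u in c..S, u ^ a) + 2 ^ |a| / (b + 1) * S ^ (a + b + 1) := by
  have hS : 0 < S := hc.trans_le hcS
  have hb1 : 0 < b + 1 := by linarith
  have h₁ := (intervalIntegrable_rpow_of_pos hc hS a).const_mul (2 ^ |b| * S ^ b)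
  have h₂ := (intervalIntegrable_sub_rpow hb S c S).const_mul (2 ^ |a| * S ^ a)
  calc ∫ u in c..S, u ^ a * (S - u) ^ b
      ≤ ∫ u in c..S, (2 ^ |b| * S ^ b * u ^ a + 2 ^ |a| * S ^ a * (S - u) ^ b) :=
        integral_mono_on hcS (intervalIntegrable_rpow_mul_sub_rpow hc hcS hb a) (h₁.add h₂)
          fun u hu ↦ rpow_mul_sub_rpow_le hS (hc.le.trans hu.1) hu.2 a b
    _ = 2 ^ |b| * S ^ b * (∫ u in c..S, u ^ a) +
          2 ^ |a| * S ^ a * ((S - c) ^ (b + 1) / (b + 1)) := by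
        rw [integral_add h₁ h₂, intervalIntegral.integral_const_mul,
          intervalIntegral.integral_const_mul, integral_sub_rpow hb]
    _ ≤ 2 ^ |b| * S ^ b * (∫ u in c..S, u ^ a) +
          2 ^ |a| * S ^ a * (S ^ (b + 1) / (b + 1)) := by
        gcongr
        exact sub_le_self S hc.le
    _ = 2 ^ |b| * S ^ b * (∫ u in c..S, u ^ a) + 2 ^ |a| / (b + 1) * S ^ (a + b + 1) := by
        rw [add_assoc a, rpow_add hS a]
        ring

end BetaIntegral

section CoshSubstitution

variable {s : ℝ}

lemma intervalIntegrable_comp_cosh_mul_sinh_iff (hs : 0 ≤ s) {g : ℝ → ℝ} :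
    IntervalIntegrable (fun l ↦ g (cosh l) * sinh l) volume 0 s ↔
      IntervalIntegrable g volume 1 (cosh s) := by
  rw [← cosh_zero]
  refine integrable_comp_mul_deriv_iff_of_deriv_nonneg continuous_cosh.continuousOn
    (fun l _ ↦ hasDerivAt_cosh l) fun l hl ↦ sinh_nonneg_iff.2 ?_
  exact (min_eq_left hs ▸ hl.1).le

lemma integral_comp_cosh_mul_sinh (hs : 0 ≤ s) (g : ℝ → ℝ) :
    ∫ l in 0..s, g (cosh l) * sinh l = ∫ u in 1..cosh s, g u := by
  rw [← cosh_zero]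
  refine integral_comp_mul_deriv_of_deriv_nonneg continuous_cosh.continuousOn
    (fun l _ ↦ hasDerivAt_cosh l) fun l hl ↦ sinh_nonneg_iff.2 ?_
  exact (min_eq_left hs ▸ hl.1).le

end CoshSubstitution

section CoshKernel

/-- The integrand of the interior bound with general exponents: the bound itself is about
`a = -k - 1/2` and `b = -1/2`. -/
noncomputable def coshKernel (a b r t l : ℝ) : ℝ :=
  cosh l ^ a * sinh l * (cosh t - cosh (r + l)) ^ b

variable {a b r s l : ℝ}

lemma cosh_mul_cosh_sub_cosh_le (hr : 0 ≤ r) (hls : l ≤ s) :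
    cosh r * (cosh s - cosh l) ≤ cosh (r + s) - cosh (r + l) := by
  have : 0 ≤ sinh r * (sinh s - sinh l) :=
    mul_nonneg (sinh_nonneg_iff.2 hr) (sub_nonneg.2 (sinh_le_sinh.2 hls))
  rw [cosh_add, cosh_add]
  linarith

lemma cosh_add_sub_cosh_add_rpow_le (hr : 0 ≤ r) (hl : 0 ≤ l) (hls : l ≤ s) (hb : b ≤ 0) :
    (cosh (r + s) - cosh (r + l)) ^ b ≤ cosh r ^ b * (cosh s - cosh l) ^ b := by
  rcases hls.eq_or_lt with rfl | hlt
  · rcases hb.eq_or_lt with rfl | hb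
    · simp
    · simp [zero_rpow hb.ne]
  · have hd : 0 < cosh s - cosh l :=
      sub_pos.2 (cosh_lt_cosh.2 (by rwa [abs_of_nonneg hl, abs_of_nonneg (hl.trans hls)]))
    rw [← mul_rpow (cosh_pos r).le hd.le]
    exact rpow_le_rpow_of_nonpos (mul_pos (cosh_pos r) hd) (cosh_mul_cosh_sub_cosh_le hr hls) hb

lemma coshKernel_nonneg (hr : 0 ≤ r) (hl : 0 ≤ l) (hls : l ≤ s) (a b : ℝ) :
    0 ≤ coshKernel a b r (r + s) l := by
  have hd : 0 ≤ cosh (r + s) - cosh (r + l) :=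
    (mul_nonneg (cosh_pos r).le (sub_nonneg.2 (cosh_le_cosh.2 (abs_le_abs_of_nonneg hl hls)))).trans
      (cosh_mul_cosh_sub_cosh_le hr hls)
  exact mul_nonneg (mul_nonneg (rpow_nonneg (cosh_pos l).le a) (sinh_nonneg_iff.2 hl))
    (rpow_nonneg hd b)

lemma coshKernel_le (hr : 0 ≤ r) (hl : 0 ≤ l) (hls : l ≤ s) (hb : b ≤ 0) (a : ℝ) :
    coshKernel a b r (r + s) l ≤
      cosh r ^ b * (cosh l ^ a * (cosh s - cosh l) ^ b * sinh l) := by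
  have : 0 ≤ sinh l := sinh_nonneg_iff.2 hl
  calc coshKernel a b r (r + s) l
      ≤ cosh l ^ a * sinh l * (cosh r ^ b * (cosh s - cosh l) ^ b) :=
        mul_le_mul_of_nonneg_left (cosh_add_sub_cosh_add_rpow_le hr hl hls hb) (by positivity)
    _ = _ := by ring

lemma intervalIntegrable_cosh_rpow_mul_sub_rpow_mul_sinh (hs : 0 ≤ s) (hb : -1 < b) (a : ℝ) :
    IntervalIntegrable (fun l ↦ cosh l ^ a * (cosh s - cosh l) ^ b * sinh l) volume 0 s :=
  (intervalIntegrable_comp_cosh_mul_sinh_iff hs).2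
    (intervalIntegrable_rpow_mul_sub_rpow one_pos (one_le_cosh s) hb a)

lemma intervalIntegrable_coshKernel (hr : 0 ≤ r) (hs : 0 ≤ s) (hb : -1 < b) (hb₀ : b ≤ 0)
    (a : ℝ) : IntervalIntegrable (coshKernel a b r (r + s)) volume 0 s := by
  have hmeas : Measurable (coshKernel a b r (r + s)) := by
    unfold coshKernel
    fun_prop
  refine ((intervalIntegrable_cosh_rpow_mul_sub_rpow_mul_sinh hs hb a).const_mul
    (cosh r ^ b)).mono_fun' hmeas.aestronglyMeasurable
    ((ae_restrict_mem measurableSet_uIoc).mono fun l hl ↦ ?_)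
  rw [uIoc_of_le hs] at hl
  exact (norm_of_nonneg (coshKernel_nonneg hr hl.1.le hl.2 a b)).trans_le
    (coshKernel_le hr hl.1.le hl.2 hb₀ a)

lemma integral_coshKernel_le (hr : 0 ≤ r) (hs : 0 ≤ s) (hb : -1 < b) (hb₀ : b ≤ 0) (a : ℝ) :
    ∫ l in 0..s, coshKernel a b r (r + s) l ≤
      cosh r ^ b * ∫ u in 1..cosh s, u ^ a * (cosh s - u) ^ b :=
  calc ∫ l in 0..s, coshKernel a b r (r + s) l
      ≤ ∫ l in 0..s, cosh r ^ b * (cosh l ^ a * (cosh s - cosh l) ^ b * sinh l) :=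
        integral_mono_on hs (intervalIntegrable_coshKernel hr hs hb hb₀ a)
          ((intervalIntegrable_cosh_rpow_mul_sub_rpow_mul_sinh hs hb a).const_mul _)
          fun _ hl ↦ coshKernel_le hr hl.1 hl.2 hb₀ a
    _ = cosh r ^ b * ∫ u in 1..cosh s, u ^ a * (cosh s - u) ^ b := by
        rw [intervalIntegral.integral_const_mul,
          integral_comp_cosh_mul_sinh hs fun u ↦ u ^ a * (cosh s - u) ^ b]

end CoshKernel

section GrowthFactor

lemma integral_rpow_le_of_neg_one_lt {c p : ℝ} (hc : 0 ≤ c) (hp : -1 < p) (S : ℝ) :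
    ∫ u in c..S, u ^ p ≤ S ^ (p + 1) / (p + 1) := by
  rw [integral_rpow (.inl hp)]
  have : 0 ≤ p + 1 := by linarith
  gcongr
  exact sub_le_self _ (rpow_nonneg hc _)

lemma integral_rpow_le_of_lt_neg_one {c p S : ℝ} (hc : 0 < c) (hS : 0 < S) (hp : p < -1) :
    ∫ u in c..S, u ^ p ≤ c ^ (p + 1) / -(p + 1) := by
  rw [integral_rpow (.inr ⟨hp.ne, notMem_uIcc_of_lt hc hS⟩), ← neg_div_neg_eq, neg_sub]
  have : 0 ≤ -(p + 1) := by linarith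
  gcongr
  exact sub_le_self _ (rpow_nonneg hS.le _)

lemma log_cosh_le_abs (s : ℝ) : log (cosh s) ≤ |s| := by
  rw [log_le_iff_le_exp (cosh_pos s), ← cosh_abs, cosh_eq]
  have : exp (-|s|) ≤ exp |s| := exp_le_exp.2 (neg_le_self (abs_nonneg s))
  linarith

lemma exists_integral_rpow_le_mul_Kfac (k : ℝ) :
    ∃ C, 0 < C ∧ ∀ s, ∫ u in 1..cosh s, u ^ (-k - 1 / 2) ≤ C * Kfac k s := by
  have hexp : -k - 1 / 2 + 1 = 1 / 2 - k := by ring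
  rcases lt_trichotomy k (1 / 2) with hk | rfl | hk
  · refine ⟨(1 / 2 - k)⁻¹, inv_pos.2 (by linarith), fun s ↦ ?_⟩
    rw [Kfac, if_pos hk, ← div_eq_inv_mul, ← hexp]
    exact integral_rpow_le_of_neg_one_lt zero_le_one (by linarith) _
  · refine ⟨1, one_pos, fun s ↦ ?_⟩
    calc ∫ u in 1..cosh s, u ^ (-(1 / 2) - 1 / 2 : ℝ) = log (cosh s) := by
          norm_num [rpow_neg_one, integral_inv_of_pos one_pos (cosh_pos s)]
      _ ≤ |s| := log_cosh_le_abs s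
      _ ≤ √(1 + s ^ 2) := abs_le_sqrt (by linarith)
      _ = 1 * Kfac (1 / 2) s := by simp [Kfac]
  · refine ⟨(k - 1 / 2)⁻¹, inv_pos.2 (by linarith), fun s ↦ ?_⟩
    calc ∫ u in 1..cosh s, u ^ (-k - 1 / 2)
        ≤ 1 ^ (-k - 1 / 2 + 1) / -(-k - 1 / 2 + 1) :=
          integral_rpow_le_of_lt_neg_one one_pos (cosh_pos s) (by linarith)
      _ = (k - 1 / 2)⁻¹ := by rw [hexp, neg_sub, one_rpow, one_div (k - 1 / 2)]
      _ = (k - 1 / 2)⁻¹ * Kfac k s := by rw [Kfac, if_neg hk.not_gt, if_neg hk.ne', mul_one]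

lemma one_le_Kfac {k : ℝ} (hk : 1 / 2 ≤ k) (s : ℝ) : 1 ≤ Kfac k s := by
  rw [Kfac, if_neg hk.not_gt]
  split_ifs
  · exact one_le_sqrt.2 (le_add_of_nonneg_right (sq_nonneg s))
  · exact le_rfl

lemma cosh_rpow_neg_le_mul_Kfac (k s : ℝ) :
    cosh s ^ (-k) ≤ cosh s ^ (-(1 / 2) : ℝ) * Kfac k s := by
  rcases lt_or_ge k (1 / 2) with hk | hk
  · rw [Kfac, if_pos hk, ← rpow_add (cosh_pos s)]
    exact le_of_eq (by ring_nf)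
  · calc cosh s ^ (-k) ≤ cosh s ^ (-(1 / 2) : ℝ) :=
          rpow_le_rpow_of_exponent_le (one_le_cosh s) (by linarith)
      _ ≤ cosh s ^ (-(1 / 2) : ℝ) * Kfac k s :=
          le_mul_of_one_le_right (rpow_nonneg (cosh_pos s).le _) (one_le_Kfac hk s)

lemma exists_integral_rpow_mul_sub_rpow_le_mul_Kfac (k : ℝ) :
    ∃ N, 0 < N ∧ ∀ s, ∫ u in 1..cosh s, u ^ (-k - 1 / 2) * (cosh s - u) ^ (-(1 / 2) : ℝ) ≤
      N * cosh s ^ (-(1 / 2) : ℝ) * Kfac k s := by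
  obtain ⟨C, hC, hCK⟩ := exists_integral_rpow_le_mul_Kfac k
  set A : ℝ := 2 ^ |-(1 / 2 : ℝ)|
  set B : ℝ := 2 ^ |-k - 1 / 2| / (-(1 / 2) + 1)
  have : 0 < B := div_pos (by positivity) (by norm_num)
  refine ⟨A * C + B, by positivity, fun s ↦ ?_⟩
  have : 0 ≤ cosh s ^ (-(1 / 2) : ℝ) := rpow_nonneg (cosh_pos s).le _
  calc ∫ u in 1..cosh s, u ^ (-k - 1 / 2) * (cosh s - u) ^ (-(1 / 2) : ℝ)
      ≤ A * cosh s ^ (-(1 / 2) : ℝ) * (∫ u in 1..cosh s, u ^ (-k - 1 / 2)) +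
          B * cosh s ^ (-k - 1 / 2 + -(1 / 2) + 1) :=
        integral_rpow_mul_sub_rpow_le one_pos (one_le_cosh s) (by norm_num) _
    _ = A * cosh s ^ (-(1 / 2) : ℝ) * (∫ u in 1..cosh s, u ^ (-k - 1 / 2)) +
          B * cosh s ^ (-k) := by ring_nf
    _ ≤ A * cosh s ^ (-(1 / 2) : ℝ) * (C * Kfac k s) +
          B * (cosh s ^ (-(1 / 2) : ℝ) * Kfac k s) := by
        gcongr
        · exact hCK s
        · exact cosh_rpow_neg_le_mul_Kfac k s
    _ = (A * C + B) * cosh s ^ (-(1 / 2) : ℝ) * Kfac k s := by ring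

end GrowthFactor

theorem interior_kernel_bound_general (k : ℝ) :
    ∃ N : ℝ, 0 < N ∧ ∀ r t : ℝ, 0 ≤ r → r ≤ t →
      IntervalIntegrable (coshKernel (-k - 1 / 2) (-(1 / 2)) r t) volume 0 (t - r) ∧
      ∫ l in (0 : ℝ)..(t - r), coshKernel (-k - 1 / 2) (-(1 / 2)) r t l ≤
        N * cosh r ^ (-(1 / 2) : ℝ) * cosh (t - r) ^ (-(1 / 2) : ℝ) * Kfac k (t - r) := by
  obtain ⟨N, hN, hNK⟩ := exists_integral_rpow_mul_sub_rpow_le_mul_Kfac k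
  refine ⟨N, hN, fun r t hr hrt ↦ ?_⟩
  obtain ⟨s, hs, rfl⟩ := exists_nonneg_add_of_le hrt
  have hb : (-1 : ℝ) < -(1 / 2) := by norm_num
  have hb₀ : -(1 / 2 : ℝ) ≤ 0 := by norm_num
  rw [add_sub_cancel_left]
  refine ⟨intervalIntegrable_coshKernel hr hs hb hb₀ _, ?_⟩
  calc ∫ l in 0..s, coshKernel (-k - 1 / 2) (-(1 / 2)) r (r + s) l
      ≤ cosh r ^ (-(1 / 2) : ℝ) *
          ∫ u in 1..cosh s, u ^ (-k - 1 / 2) * (cosh s - u) ^ (-(1 / 2) : ℝ) :=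
        integral_coshKernel_le hr hs hb hb₀ _
    _ ≤ cosh r ^ (-(1 / 2) : ℝ) * (N * cosh s ^ (-(1 / 2) : ℝ) * Kfac k s) :=
        mul_le_mul_of_nonneg_left (hNK s) (rpow_nonneg (cosh_pos r).le _)
    _ = N * cosh r ^ (-(1 / 2) : ℝ) * cosh s ^ (-(1 / 2) : ℝ) * Kfac k s := by ring

theorem interior_kernel_bound (k : ℝ) (hk : 0 < k) :
    ∃ N : ℝ, 0 < N ∧ ∀ r t : ℝ, 0 ≤ r → r < t → 1 ≤ t - r →
      (∫ l in (0 : ℝ)..(t - r),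
        Real.cosh l ^ (-k - 1 / 2 : ℝ) * Real.sinh l *
          (Real.cosh t - Real.cosh (r + l)) ^ (-(1 / 2) : ℝ))
      ≤ N * Real.cosh r ^ (-(1 / 2) : ℝ) * Real.cosh (t - r) ^ (-(1 / 2) : ℝ)
          * Kfac k (t - r) := by
  obtain ⟨N, hN, hbound⟩ := interior_kernel_bound_general k
  exact ⟨N, hN, fun r t hr hrt _ ↦ (hbound r t hr hrt.le).2⟩
end

section
/- For every τ₀ > 0 there exists a constant C₀ ∈ (0,1] such that for every continuous nonnegative function φ : [0,∞) → ℝ and all t > 0 and r > τ₀/2: I(t,r,φ) ≥ (C₀/√(sinh r)) ∫_{max(t,r)}^{t+r} φ(λ) √(sinh λ) dλ. -/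
open MeasureTheory intervalIntegral

/-- The radial form, at geodesic radius `r` and time `t`, of the solution of the shifted
wave equation on the hyperbolic plane with data `u(0) = 0`, `∂ₜu(0) = φ`. -/
noncomputable def Isol (t r : ℝ) (φ : ℝ → ℝ) : ℝ :=
  (1 / (Real.pi * Real.sqrt 2)) *
    ∫ s in (0 : ℝ)..t, ∫ l in |r - s|..(r + s),
      φ l * Real.sinh l * Real.sinh s *
        ((Real.cosh t - Real.cosh s) * (Real.cosh (r + s) - Real.cosh l) *
          (Real.cosh l - Real.cosh (r - s))) ^ (-(1 / 2) : ℝ)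

/-!
Fubini reduces the bound to one on `∫ K(s, l) ds`, where `K` is the kernel of `Isol`, taken for
`max t r < l < t + r` over `l - r < s < t`. The kernel is nonnegative, so shrinking the domain of
integration only decreases the integral. Exchanging the roles of `s` and `l`,
`(cosh (r + s) - cosh l) (cosh l - cosh (r - s)) =
  (cosh (l + r) - cosh s) (cosh s - cosh (l - r))`,
and once `cosh (l + r) - cosh s` is replaced by the larger `cosh (l + r)`, the substitution
`u = cosh s` leaves the arcsine integral `∫ du / √((B - u) (u - A)) = π`, whatever `A < B` are.
The remaining factor `sinh l / √(cosh (l + r))` is compared with `√(sinh l) / √(sinh r)` by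
means of `cosh (l + r) ≤ 2 cosh l cosh r ≤ 2 sinh l sinh r / tanh² r`, for `r ≤ l`.
The same arcsine integral, in `l`, shows that the double integral converges absolutely.
-/

open Set Real

section RegionBetween

variable {α E : Type*} [NormedAddCommGroup E] {f g : α → ℝ} {s : Set α}

lemma indicator_regionBetween_apply (F : α × ℝ → E) (x : α) (y : ℝ) :
    (regionBetween f g s).indicator F (x, y) =
      s.indicator (fun x => (Ioo (f x) (g x)).indicator (fun y => F (x, y)) y) x := by
  by_cases hx : x ∈ s <;> simp [indicator, regionBetween, hx]

lemma integral_indicator_regionBetween [NormedSpace ℝ E] (F : α × ℝ → E) (x : α) :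
    ∫ y, (regionBetween f g s).indicator F (x, y) =
      s.indicator (fun x => ∫ y in Ioo (f x) (g x), F (x, y)) x := by
  by_cases hx : x ∈ s <;>
    simp [indicator_regionBetween_apply, hx, MeasureTheory.integral_indicator measurableSet_Ioo]

variable [MeasurableSpace α] {μ : Measure α}

lemma integrableOn_regionBetween_of_section (hf : Measurable f) (hg : Measurable g)
    (hs : MeasurableSet s) {F : α × ℝ → E}
    (hF : AEStronglyMeasurable F ((μ.prod volume).restrict (regionBetween f g s)))
    (hF_section : ∀ x ∈ s, IntegrableOn (fun y => F (x, y)) (Ioo (f x) (g x)))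
    (hF_norm : IntegrableOn (fun x => ∫ y in Ioo (f x) (g x), ‖F (x, y)‖) s μ) :
    IntegrableOn F (regionBetween f g s) (μ.prod volume) := by
  have hR := measurableSet_regionBetween hf hg hs
  rw [← integrable_indicator_iff hR,
    integrable_prod_iff ((aestronglyMeasurable_indicator_iff hR).2 hF)]
  refine ⟨.of_forall fun x => ?_, ?_⟩
  · by_cases hx : x ∈ s
    · simpa [indicator_regionBetween_apply, hx, integrable_indicator_iff measurableSet_Ioo]
        using hF_section x hx
    · simp [indicator_regionBetween_apply, hx]
  · simp_rw [norm_indicator_eq_indicator_norm, integral_indicator_regionBetween]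
    exact (integrable_indicator_iff hs).2 hF_norm

lemma setIntegral_regionBetween [NormedSpace ℝ E] [SFinite μ] (hf : Measurable f)
    (hg : Measurable g) (hs : MeasurableSet s) {F : α × ℝ → E}
    (hF : IntegrableOn F (regionBetween f g s) (μ.prod volume)) :
    ∫ p in regionBetween f g s, F p ∂(μ.prod volume) =
      ∫ x in s, (∫ y in Ioo (f x) (g x), F (x, y)) ∂μ := by
  have hR := measurableSet_regionBetween hf hg hs
  rw [← MeasureTheory.integral_indicator hR,
    integral_prod _ ((integrable_indicator_iff hR).2 hF)]
  simp_rw [integral_indicator_regionBetween]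
  exact MeasureTheory.integral_indicator hs

lemma integrableOn_integral_of_regionBetween [NormedSpace ℝ E] (hf : Measurable f)
    (hg : Measurable g) (hs : MeasurableSet s) {F : α × ℝ → E}
    (hF : IntegrableOn F (regionBetween f g s) (μ.prod volume)) :
    IntegrableOn (fun x => ∫ y in Ioo (f x) (g x), F (x, y)) s μ := by
  have hR := measurableSet_regionBetween hf hg hs
  rw [← integrable_indicator_iff hs]
  simpa only [integral_indicator_regionBetween] using
    ((integrable_indicator_iff hR).2 hF).integral_prod_left

end RegionBetween

lemma rpow_neg_half_eq_inv_sqrt (x : ℝ) : x ^ (-(1 / 2) : ℝ) = (√x)⁻¹ := by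
  rcases le_or_gt 0 x with hx | hx
  · rw [rpow_neg hx, sqrt_eq_rpow]
  · rw [rpow_def_of_neg hx, sqrt_eq_zero_of_nonpos hx.le, neg_mul, cos_neg, one_div_mul_eq_div,
      cos_pi_div_two, mul_zero, inv_zero]

section ArcsineIntegral

lemma hasDerivAt_arcsin_affine {A B u : ℝ} (hA : A < u) (hB : u < B) :
    HasDerivAt (fun v => arcsin ((2 * v - A - B) / (B - A))) (1 / √((B - u) * (u - A))) u := by
  have hAB : 0 < B - A := by linarith
  have hpos : 0 < (B - u) * (u - A) := mul_pos (sub_pos.2 hB) (sub_pos.2 hA)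
  have hne_neg_one : (2 * u - A - B) / (B - A) ≠ -1 := fun h => by
    rw [div_eq_iff hAB.ne'] at h
    linarith
  have hne_one : (2 * u - A - B) / (B - A) ≠ 1 := fun h => by
    rw [div_eq_iff hAB.ne'] at h
    linarith
  have h_affine : HasDerivAt (fun v => (2 * v - A - B) / (B - A)) (2 / (B - A)) u := by
    simpa using ((((hasDerivAt_id u).const_mul 2).sub_const A).sub_const B).div_const (B - A)
  have h_sq : 1 - ((2 * u - A - B) / (B - A)) ^ 2 = (2 * √((B - u) * (u - A)) / (B - A)) ^ 2 := by
    rw [div_pow _ _ 2, div_pow _ _ 2, mul_pow, sq_sqrt hpos.le]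
    field_simp
    ring
  refine ((hasDerivAt_arcsin hne_neg_one hne_one).comp u h_affine).congr_deriv ?_
  rw [h_sq, sqrt_sq (by positivity)]
  field_simp

variable {f f' : ℝ → ℝ} {a b : ℝ}

lemma lt_and_lt_of_hasDerivAt_pos (hf : ContinuousOn f (Icc a b))
    (hff' : ∀ x ∈ Ioo a b, HasDerivAt f (f' x) x) (hf' : ∀ x ∈ Ioo a b, 0 < f' x)
    {x : ℝ} (hx : x ∈ Ioo a b) : f a < f x ∧ f x < f b := by
  have hmono : StrictMonoOn f (Icc a b) :=
    strictMonoOn_of_hasDerivWithinAt_pos (convex_Icc a b) hf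
      (by simpa only [interior_Icc] using fun x hx => (hff' x hx).hasDerivWithinAt)
      (by simpa only [interior_Icc] using hf')
  have hab := hx.1.trans hx.2
  exact ⟨hmono (left_mem_Icc.2 hab.le) (Ioo_subset_Icc_self hx) hx.1,
    hmono (Ioo_subset_Icc_self hx) (right_mem_Icc.2 hab.le) hx.2⟩

lemma integrableOn_deriv_div_sqrt_sub (hf : ContinuousOn f (Icc a b))
    (hff' : ∀ x ∈ Ioo a b, HasDerivAt f (f' x) x) (hf' : ∀ x ∈ Ioo a b, 0 < f' x) :
    IntegrableOn (fun x => f' x / √(f b - f x)) (Ioo a b) := by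
  rw [← integrableOn_Ioc_iff_integrableOn_Ioo]
  refine integrableOn_deriv_of_nonneg (g := fun x => -2 * √(f b - f x)) (by fun_prop)
    (fun x hx => ?_) fun x hx => div_nonneg (hf' x hx).le (sqrt_nonneg _)
  have hlt := sub_pos.2 (lt_and_lt_of_hasDerivAt_pos hf hff' hf' hx).2
  refine ((((hff' x hx).const_sub (f b)).sqrt hlt.ne').const_mul (-2)).congr_deriv ?_
  field_simp

lemma hasDerivAt_arcsin_affine_comp (hf : ContinuousOn f (Icc a b))
    (hff' : ∀ x ∈ Ioo a b, HasDerivAt f (f' x) x) (hf' : ∀ x ∈ Ioo a b, 0 < f' x)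
    {x : ℝ} (hx : x ∈ Ioo a b) :
    HasDerivAt (fun x => arcsin ((2 * f x - f a - f b) / (f b - f a)))
      (f' x / √((f b - f x) * (f x - f a))) x := by
  obtain ⟨ha, hb⟩ := lt_and_lt_of_hasDerivAt_pos hf hff' hf' hx
  exact ((hasDerivAt_arcsin_affine ha hb).comp x (hff' x hx)).congr_deriv (one_div_mul_eq_div _ _)

lemma continuousOn_arcsin_affine_comp (hf : ContinuousOn f (Icc a b)) :
    ContinuousOn (fun x => arcsin ((2 * f x - f a - f b) / (f b - f a))) (Icc a b) :=
  continuous_arcsin.comp_continuousOn (by fun_prop)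

lemma integrableOn_deriv_div_sqrt_mul (hf : ContinuousOn f (Icc a b))
    (hff' : ∀ x ∈ Ioo a b, HasDerivAt f (f' x) x) (hf' : ∀ x ∈ Ioo a b, 0 < f' x) :
    IntegrableOn (fun x => f' x / √((f b - f x) * (f x - f a))) (Ioo a b) :=
  (integrableOn_deriv_of_nonneg (continuousOn_arcsin_affine_comp hf)
    (fun _ hx => hasDerivAt_arcsin_affine_comp hf hff' hf' hx)
    fun x hx => div_nonneg (hf' x hx).le (sqrt_nonneg _)).mono_set Ioo_subset_Ioc_self

lemma integral_deriv_div_sqrt_mul (hab : a < b) (hf : ContinuousOn f (Icc a b))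
    (hff' : ∀ x ∈ Ioo a b, HasDerivAt f (f' x) x) (hf' : ∀ x ∈ Ioo a b, 0 < f' x) :
    ∫ x in Ioo a b, f' x / √((f b - f x) * (f x - f a)) = π := by
  have hint := integrableOn_deriv_div_sqrt_mul hf hff' hf'
  rw [← integrableOn_Ioc_iff_integrableOn_Ioo,
    ← intervalIntegrable_iff_integrableOn_Ioc_of_le hab.le] at hint
  obtain ⟨c, hc⟩ := exists_between hab
  obtain ⟨hac, hcb⟩ := lt_and_lt_of_hasDerivAt_pos hf hff' hf' hc
  have hfab : f b - f a ≠ 0 := (sub_pos.2 (hac.trans hcb)).ne'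
  have hright : (2 * f b - f a - f b) / (f b - f a) = 1 := by
    rw [div_eq_one_iff_eq hfab]
    ring
  have hleft : (2 * f a - f a - f b) / (f b - f a) = -1 := by
    rw [div_eq_iff hfab]
    ring
  rw [← integral_Ioc_eq_integral_Ioo, ← intervalIntegral.integral_of_le hab.le,
    integral_eq_sub_of_hasDerivAt_of_le hab.le (continuousOn_arcsin_affine_comp hf)
      (fun _ hx => hasDerivAt_arcsin_affine_comp hf hff' hf' hx) hint,
    hright, hleft, arcsin_one, arcsin_neg_one, sub_neg_eq_add, add_halves]

end ArcsineIntegral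

section Hyperbolic

variable {a b : ℝ}

lemma integrableOn_sinh_div_sqrt_cosh_sub (ha : 0 ≤ a) :
    IntegrableOn (fun x => sinh x / √(cosh b - cosh x)) (Ioo a b) :=
  integrableOn_deriv_div_sqrt_sub continuous_cosh.continuousOn (fun x _ => hasDerivAt_cosh x)
    fun _ hx => sinh_pos_iff.2 (ha.trans_lt hx.1)

lemma integrableOn_sinh_div_sqrt_mul (ha : 0 ≤ a) :
    IntegrableOn (fun x => sinh x / √((cosh b - cosh x) * (cosh x - cosh a))) (Ioo a b) :=
  integrableOn_deriv_div_sqrt_mul continuous_cosh.continuousOn (fun x _ => hasDerivAt_cosh x)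
    fun _ hx => sinh_pos_iff.2 (ha.trans_lt hx.1)

lemma integral_sinh_div_sqrt_mul (ha : 0 ≤ a) (hab : a < b) :
    ∫ x in Ioo a b, sinh x / √((cosh b - cosh x) * (cosh x - cosh a)) = π :=
  integral_deriv_div_sqrt_mul hab continuous_cosh.continuousOn (fun x _ => hasDerivAt_cosh x)
    fun _ hx => sinh_pos_iff.2 (ha.trans_lt hx.1)

lemma cosh_sub_mul_cosh_sub (r s l : ℝ) :
    (cosh (r + s) - cosh l) * (cosh l - cosh (r - s)) =
      (cosh (l + r) - cosh s) * (cosh s - cosh (l - r)) := by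
  simp only [cosh_add, cosh_sub]
  linear_combination (cosh l ^ 2 - cosh s ^ 2) * cosh_sq r + sinh r ^ 2 * (cosh_sq l - cosh_sq s)

lemma tanh_mul_cosh (x : ℝ) : tanh x * cosh x = sinh x := by
  rw [tanh_eq_sinh_div_cosh, div_mul_cancel₀ _ (cosh_pos x).ne']

lemma tanh_mul_cosh_le_sinh {x y : ℝ} (hxy : x ≤ y) : tanh x * cosh y ≤ sinh y := by
  have h : 0 ≤ sinh (y - x) := sinh_nonneg_iff.2 (sub_nonneg.2 hxy)
  rw [sinh_sub] at h
  rw [tanh_eq_sinh_div_cosh, div_mul_eq_mul_div, div_le_iff₀ (cosh_pos x)]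
  linarith

lemma tanh_le_tanh_of_le {x y : ℝ} (hxy : x ≤ y) : tanh x ≤ tanh y := by
  rw [tanh_eq_sinh_div_cosh y, le_div_iff₀ (cosh_pos y)]
  exact tanh_mul_cosh_le_sinh hxy

lemma tanh_pos_of_pos {x : ℝ} (hx : 0 < x) : 0 < tanh x := by
  rw [tanh_eq_sinh_div_cosh]
  exact div_pos (sinh_pos_iff.2 hx) (cosh_pos x)

lemma cosh_add_le_two_mul (x y : ℝ) : cosh (x + y) ≤ 2 * (cosh x * cosh y) := by
  have h := cosh_pos (x - y)
  rw [cosh_sub] at h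
  rw [cosh_add]
  linarith

lemma tanh_sq_mul_cosh_add_le {r l : ℝ} (hr : 0 ≤ r) (hrl : r ≤ l) :
    tanh r ^ 2 * cosh (l + r) ≤ 2 * (sinh l * sinh r) :=
  calc tanh r ^ 2 * cosh (l + r) ≤ tanh r ^ 2 * (2 * (cosh l * cosh r)) := by
        gcongr
        exact cosh_add_le_two_mul l r
    _ = 2 * (tanh r * cosh l * (tanh r * cosh r)) := by ring
    _ = 2 * (tanh r * cosh l * sinh r) := by rw [tanh_mul_cosh]
    _ ≤ 2 * (sinh l * sinh r) := by
        have := sinh_nonneg_iff.2 hr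
        gcongr
        exact tanh_mul_cosh_le_sinh hrl

lemma tanh_div_sqrt_sinh_mul_le {r l : ℝ} (hr : 0 < r) (hrl : r ≤ l) :
    tanh r / (√2 * √(sinh r)) * √(sinh l) ≤ sinh l / √(cosh (l + r)) := by
  have hsinh_r : 0 < sinh r := sinh_pos_iff.2 hr
  have hsinh_l : 0 < sinh l := sinh_pos_iff.2 (hr.trans_le hrl)
  have h_sqrt : tanh r * √(cosh (l + r)) ≤ √2 * (√(sinh l) * √(sinh r)) := by
    rw [← sqrt_mul hsinh_l.le, ← sqrt_mul zero_le_two]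
    refine le_sqrt_of_sq_le ?_
    rw [mul_pow, sq_sqrt (cosh_pos _).le]
    exact tanh_sq_mul_cosh_add_le hr.le hrl
  have hcosh := sqrt_pos.2 (cosh_pos (l + r))
  rw [div_mul_eq_mul_div, div_le_div_iff₀ (mul_pos (sqrt_pos.2 two_pos) (sqrt_pos.2 hsinh_r)) hcosh]
  calc tanh r * √(sinh l) * √(cosh (l + r)) = tanh r * √(cosh (l + r)) * √(sinh l) := by ring
    _ ≤ √2 * (√(sinh l) * √(sinh r)) * √(sinh l) := by gcongr
    _ = √(sinh l) ^ 2 * (√2 * √(sinh r)) := by ring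
    _ = sinh l * (√2 * √(sinh r)) := by rw [sq_sqrt hsinh_l.le]

end Hyperbolic

/-- The kernel of `Isol`: its integrand without the initial datum. The power `-1/2` is written as
the inverse of a square root, which by `rpow_neg_half_eq_inv_sqrt` agrees with it on all of `ℝ`. -/
noncomputable def waveKernel (t r s l : ℝ) : ℝ :=
  sinh l * sinh s /
    √((cosh t - cosh s) * (cosh (r + s) - cosh l) * (cosh l - cosh (r - s)))

/-- The domain of integration of `Isol`, as a set of pairs `(s, l)`. -/
def waveDomain (t r : ℝ) : Set (ℝ × ℝ) :=
  regionBetween (fun s => |r - s|) (fun s => r + s) (Ioo 0 t)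

/-- The part of the domain of integration of `Isol` over `l ∈ (max t r, t + r)`. The pairs are
`(l, s)`, in the opposite order to `waveDomain`, because `s` is integrated first. -/
def waveSubdomain (t r : ℝ) : Set (ℝ × ℝ) :=
  regionBetween (fun l => l - r) (fun _ => t) (Ioo (max t r) (t + r))

section WaveKernel

variable {t r s l : ℝ} {φ : ℝ → ℝ}

lemma measurableSet_waveDomain : MeasurableSet (waveDomain t r) :=
  measurableSet_regionBetween (by fun_prop) (by fun_prop) measurableSet_Ioo

lemma snd_mem_Icc_of_mem_waveDomain {p : ℝ × ℝ} (hp : p ∈ waveDomain t r) :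
    p.2 ∈ Icc 0 (t + r) :=
  ⟨(abs_nonneg _).trans hp.2.1.le, by linarith [hp.1.2, hp.2.2]⟩

lemma waveSubdomain_subset : waveSubdomain t r ⊆ Prod.swap ⁻¹' waveDomain t r := by
  rintro ⟨l, s⟩ ⟨⟨hl, -⟩, hls, hst⟩
  obtain ⟨htl, hrl⟩ := max_lt_iff.1 hl
  dsimp only at htl hrl hls hst
  have hs : s ∈ Ioo 0 t := ⟨by linarith, hst⟩
  have hl_mem : l ∈ Ioo |r - s| (r + s) := ⟨abs_lt.2 ⟨by linarith, by linarith⟩, by linarith⟩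
  exact ⟨hs, hl_mem⟩

lemma measurable_waveKernel : Measurable fun p : ℝ × ℝ => waveKernel t r p.1 p.2 := by
  unfold waveKernel
  fun_prop

lemma waveKernel_nonneg (hs : 0 ≤ s) (hl : 0 ≤ l) : 0 ≤ waveKernel t r s l :=
  div_nonneg (mul_nonneg (sinh_nonneg_iff.2 hl) (sinh_nonneg_iff.2 hs)) (sqrt_nonneg _)

lemma waveKernel_eq_mul_arcsine_right (hst : |s| ≤ |t|) :
    waveKernel t r s = fun l => sinh s / √(cosh t - cosh s) *
      (sinh l / √((cosh (r + s) - cosh l) * (cosh l - cosh |r - s|))) := by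
  ext l
  rw [waveKernel, mul_assoc (cosh t - cosh s), sqrt_mul (sub_nonneg.2 (cosh_le_cosh.2 hst)),
    cosh_abs, mul_comm (sinh l), mul_div_mul_comm]

lemma waveKernel_eq_mul_arcsine_left (hs : |s| ≤ |l + r|) :
    waveKernel t r s l = sinh l / √(cosh (l + r) - cosh s) *
      (sinh s / √((cosh t - cosh s) * (cosh s - cosh (l - r)))) := by
  rw [waveKernel, mul_assoc (cosh t - cosh s), cosh_sub_mul_cosh_sub, mul_left_comm,
    sqrt_mul (sub_nonneg.2 (cosh_le_cosh.2 hs)), mul_div_mul_comm]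

lemma abs_sub_lt_add (hr : 0 < r) (hs : 0 < s) : |r - s| < r + s :=
  abs_lt.2 ⟨by linarith, by linarith⟩

lemma integrableOn_waveKernel_right (hst : |s| ≤ |t|) :
    IntegrableOn (waveKernel t r s) (Ioo |r - s| (r + s)) := by
  rw [waveKernel_eq_mul_arcsine_right hst]
  exact (integrableOn_sinh_div_sqrt_mul (abs_nonneg _)).const_mul _

lemma integral_waveKernel_right (hr : 0 < r) (hs : 0 < s) (hst : |s| ≤ |t|) :
    ∫ l in Ioo |r - s| (r + s), waveKernel t r s l = sinh s / √(cosh t - cosh s) * π := by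
  rw [waveKernel_eq_mul_arcsine_right hst, MeasureTheory.integral_const_mul,
    integral_sinh_div_sqrt_mul (abs_nonneg _) (abs_sub_lt_add hr hs)]

lemma integrableOn_waveKernel (hr : 0 < r) :
    IntegrableOn (fun p => waveKernel t r p.1 p.2) (waveDomain t r) (volume.prod volume) := by
  have habs (s : ℝ) (hs : s ∈ Ioo 0 t) : |s| ≤ |t| := abs_le_abs_of_nonneg hs.1.le hs.2.le
  refine integrableOn_regionBetween_of_section (by fun_prop) (by fun_prop) measurableSet_Ioo
    measurable_waveKernel.aestronglyMeasurable
    (fun s hs => integrableOn_waveKernel_right (habs s hs)) ?_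
  refine IntegrableOn.congr_fun ((integrableOn_sinh_div_sqrt_cosh_sub le_rfl).mul_const π)
    (fun s hs => ?_) measurableSet_Ioo
  dsimp only
  rw [← integral_waveKernel_right hr hs.1 (habs s hs)]
  refine setIntegral_congr_fun measurableSet_Ioo fun l hl => ?_
  exact (norm_of_nonneg (waveKernel_nonneg hs.1.le ((abs_nonneg _).trans hl.1.le))).symm

lemma integrableOn_mul_waveKernel (hr : 0 < r) (hφ : ContinuousOn φ (Icc 0 (t + r))) :
    IntegrableOn (fun p => φ p.2 * waveKernel t r p.1 p.2) (waveDomain t r)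
      (volume.prod volume) := by
  obtain ⟨M, hM⟩ := isCompact_Icc.exists_bound_of_continuousOn hφ
  have hφ_snd : ContinuousOn (fun p : ℝ × ℝ => φ p.2) (waveDomain t r) :=
    hφ.comp continuousOn_snd fun _ => snd_mem_Icc_of_mem_waveDomain
  exact (integrableOn_waveKernel hr).bdd_mul
    (hφ_snd.aestronglyMeasurable measurableSet_waveDomain)
    (ae_restrict_of_forall_mem measurableSet_waveDomain
      fun _ hp => hM _ (snd_mem_Icc_of_mem_waveDomain hp))

lemma Isol_eq_setIntegral (ht : 0 < t) (hr : 0 < r) (hφ : ContinuousOn φ (Icc 0 (t + r))) :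
    Isol t r φ = 1 / (π * √2) *
      ∫ p in waveDomain t r, φ p.2 * waveKernel t r p.1 p.2 ∂(volume.prod volume) := by
  have h_integrand (s l : ℝ) : φ l * sinh l * sinh s * ((cosh t - cosh s) *
      (cosh (r + s) - cosh l) * (cosh l - cosh (r - s))) ^ (-(1 / 2) : ℝ) =
      φ l * waveKernel t r s l := by
    rw [rpow_neg_half_eq_inv_sqrt, waveKernel]
    ring
  simp only [Isol, h_integrand]
  rw [waveDomain, setIntegral_regionBetween (by fun_prop) (by fun_prop) measurableSet_Ioo
    (integrableOn_mul_waveKernel hr hφ), intervalIntegral.integral_of_le ht.le,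
    integral_Ioc_eq_integral_Ioo]
  congr 1
  refine setIntegral_congr_fun measurableSet_Ioo fun s hs => ?_
  simp only [intervalIntegral.integral_of_le (abs_sub_lt_add hr hs.1).le,
    integral_Ioc_eq_integral_Ioo]

lemma integrableOn_mul_waveKernel_swap (hr : 0 < r) (hφ : ContinuousOn φ (Icc 0 (t + r))) :
    IntegrableOn (fun p => φ p.1 * waveKernel t r p.2 p.1) (Prod.swap ⁻¹' waveDomain t r)
      (volume.prod volume) :=
  (Measure.measurePreserving_swap.integrableOn_comp_preimage
    MeasurableEquiv.prodComm.measurableEmbedding).2 (integrableOn_mul_waveKernel hr hφ)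

lemma setIntegral_waveSubdomain_le (hr : 0 < r) (hφ : ContinuousOn φ (Icc 0 (t + r)))
    (hφ_nonneg : ∀ x ∈ Icc 0 (t + r), 0 ≤ φ x) :
    ∫ p in waveSubdomain t r, φ p.1 * waveKernel t r p.2 p.1 ∂(volume.prod volume) ≤
      ∫ p in waveDomain t r, φ p.2 * waveKernel t r p.1 p.2 ∂(volume.prod volume) := by
  have h_swap := Measure.measurePreserving_swap.setIntegral_preimage_emb
    MeasurableEquiv.prodComm.measurableEmbedding
    (fun p => φ p.2 * waveKernel t r p.1 p.2) (waveDomain t r) (μ := volume.prod volume)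
  rw [← h_swap]
  refine setIntegral_mono_set (integrableOn_mul_waveKernel_swap hr hφ) ?_
    waveSubdomain_subset.eventuallyLE
  refine ae_restrict_of_forall_mem (measurable_swap measurableSet_waveDomain) fun p hp => ?_
  have hp_mem := snd_mem_Icc_of_mem_waveDomain hp
  exact mul_nonneg (hφ_nonneg _ hp_mem) (waveKernel_nonneg hp.1.1.le hp_mem.1)

lemma le_waveKernel (hl : 0 ≤ l) (hs : 0 ≤ s) (hsl : |s| < |l + r|) :
    sinh l / √(cosh (l + r)) * (sinh s / √((cosh t - cosh s) * (cosh s - cosh (l - r)))) ≤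
      waveKernel t r s l := by
  rw [waveKernel_eq_mul_arcsine_left hsl.le]
  refine mul_le_mul_of_nonneg_right ?_ (div_nonneg (sinh_nonneg_iff.2 hs) (sqrt_nonneg _))
  exact div_le_div_of_nonneg_left (sinh_nonneg_iff.2 hl)
    (sqrt_pos.2 (sub_pos.2 (cosh_lt_cosh.2 hsl)))
    (sqrt_le_sqrt (sub_le_self _ (cosh_pos s).le))

lemma abs_lt_abs_add_of_mem_Icc (hrl : r ≤ l) (htl : t < l + r) (hs : s ∈ Icc (l - r) t) :
    |s| < |l + r| := by
  rw [abs_of_nonneg ((sub_nonneg.2 hrl).trans hs.1)]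
  exact (hs.2.trans_lt htl).trans_le (le_abs_self _)

lemma integrableOn_waveKernel_left (hrl : r ≤ l) (htl : t < l + r) :
    IntegrableOn (fun s => waveKernel t r s l) (Ioo (l - r) t) := by
  have h_abs (s : ℝ) (hs : s ∈ Icc (l - r) t) := abs_lt_abs_add_of_mem_Icc hrl htl hs
  have hcont : ContinuousOn (fun s => sinh l / √(cosh (l + r) - cosh s)) (Icc (l - r) t) :=
    ContinuousOn.div (by fun_prop) (by fun_prop) fun s hs =>
      (sqrt_pos.2 (sub_pos.2 (cosh_lt_cosh.2 (h_abs s hs)))).ne'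
  refine IntegrableOn.congr_fun
    ((integrableOn_sinh_div_sqrt_mul (sub_nonneg.2 hrl)).continuousOn_mul_of_subset hcont
      isCompact_Icc measurableSet_Ioo Ioo_subset_Icc_self) (fun s hs => ?_) measurableSet_Ioo
  exact (waveKernel_eq_mul_arcsine_left (h_abs s (Ioo_subset_Icc_self hs)).le).symm

lemma le_integral_waveKernel (hr : 0 < r) (hl : l ∈ Ioo (max t r) (t + r)) :
    sinh l / √(cosh (l + r)) * π ≤ ∫ s in Ioo (l - r) t, waveKernel t r s l := by
  obtain ⟨htl, hrl⟩ := max_lt_iff.1 hl.1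
  have hlr_nonneg : 0 ≤ l - r := sub_nonneg.2 hrl.le
  have htlr : t < l + r := htl.trans (lt_add_of_pos_right l hr)
  rw [← integral_sinh_div_sqrt_mul hlr_nonneg (sub_lt_iff_lt_add.2 hl.2),
    ← MeasureTheory.integral_const_mul]
  refine setIntegral_mono_on ((integrableOn_sinh_div_sqrt_mul hlr_nonneg).const_mul _)
    (integrableOn_waveKernel_left hrl.le htlr) measurableSet_Ioo fun s hs => ?_
  exact le_waveKernel (hr.trans hrl).le (hlr_nonneg.trans hs.1.le)
    (abs_lt_abs_add_of_mem_Icc hrl.le htlr (Ioo_subset_Icc_self hs))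

lemma le_setIntegral_waveSubdomain (ht : 0 < t) (hr : 0 < r) (hφ : ContinuousOn φ (Icc 0 (t + r)))
    (hφ_nonneg : ∀ x ∈ Icc 0 (t + r), 0 ≤ φ x) :
    π * (tanh r / (√2 * √(sinh r))) * ∫ l in max t r..t + r, φ l * √(sinh l) ≤
      ∫ p in waveSubdomain t r, φ p.1 * waveKernel t r p.2 p.1 ∂(volume.prod volume) := by
  have hint := (integrableOn_mul_waveKernel_swap hr hφ).mono_set waveSubdomain_subset
  have hmax : max t r ≤ t + r := max_le (by linarith) (by linarith)
  have hsub : Icc (max t r) (t + r) ⊆ Icc 0 (t + r) :=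
    Icc_subset_Icc_left (ht.le.trans (le_max_left t r))
  have hφ_sinh : IntegrableOn (fun l => φ l * √(sinh l)) (Ioo (max t r) (t + r)) :=
    (((hφ.mono hsub).mul (by fun_prop)).integrableOn_Icc).mono_set Ioo_subset_Icc_self
  have hint_section := integrableOn_integral_of_regionBetween (by fun_prop) (by fun_prop)
    measurableSet_Ioo hint
  rw [waveSubdomain, setIntegral_regionBetween (by fun_prop) (by fun_prop) measurableSet_Ioo hint,
    intervalIntegral.integral_of_le hmax, integral_Ioc_eq_integral_Ioo,
    ← MeasureTheory.integral_const_mul]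
  refine setIntegral_mono_on (hφ_sinh.const_mul _) hint_section measurableSet_Ioo fun l hl => ?_
  have hφl : 0 ≤ φ l := hφ_nonneg l (hsub (Ioo_subset_Icc_self hl))
  have hrl : r ≤ l := (le_max_right t r).trans hl.1.le
  calc π * (tanh r / (√2 * √(sinh r))) * (φ l * √(sinh l))
      = φ l * (tanh r / (√2 * √(sinh r)) * √(sinh l) * π) := by ring
    _ ≤ φ l * (sinh l / √(cosh (l + r)) * π) := by
        gcongr φ l * (?_ * π)
        exact tanh_div_sqrt_sinh_mul_le hr hrl
    _ ≤ φ l * ∫ s in Ioo (l - r) t, waveKernel t r s l := by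
        gcongr
        exact le_integral_waveKernel hr hl
    _ = ∫ s in Ioo (l - r) t, φ l * waveKernel t r s l :=
        (MeasureTheory.integral_const_mul _ _).symm

end WaveKernel

theorem solution_lower_bound_large_domain_general {t r : ℝ} (ht : 0 < t) (hr : 0 < r) {φ : ℝ → ℝ}
    (hφ : ContinuousOn φ (Icc 0 (t + r))) (hφ_nonneg : ∀ x ∈ Icc 0 (t + r), 0 ≤ φ x) :
    tanh r / 2 / √(sinh r) * ∫ l in max t r..t + r, φ l * √(sinh l) ≤ Isol t r φ := by
  set J := ∫ l in max t r..t + r, φ l * √(sinh l)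
  calc tanh r / 2 / √(sinh r) * J
      = 1 / (π * √2) * (π * (tanh r / (√2 * √(sinh r))) * J) := by
        field_simp
        rw [sq_sqrt zero_le_two, mul_right_comm]
    _ ≤ 1 / (π * √2) *
          ∫ p in waveDomain t r, φ p.2 * waveKernel t r p.1 p.2 ∂(volume.prod volume) := by
        gcongr
        exact (le_setIntegral_waveSubdomain ht hr hφ hφ_nonneg).trans
          (setIntegral_waveSubdomain_le hr hφ hφ_nonneg)
    _ = Isol t r φ := (Isol_eq_setIntegral ht hr hφ).symm

theorem solution_lower_bound_large_domain (τ₀ : ℝ) (hτ₀ : 0 < τ₀) :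
    ∃ C₀ : ℝ, 0 < C₀ ∧ C₀ ≤ 1 ∧
      ∀ φ : ℝ → ℝ, ContinuousOn φ (Set.Ici 0) → (∀ x ∈ Set.Ici (0 : ℝ), 0 ≤ φ x) →
        ∀ t r : ℝ, 0 < t → τ₀ / 2 < r →
          Isol t r φ ≥
            (C₀ / Real.sqrt (Real.sinh r)) *
              ∫ l in (max t r)..(t + r), φ l * Real.sqrt (Real.sinh l) := by
  refine ⟨tanh (τ₀ / 2) / 2, half_pos (tanh_pos_of_pos (half_pos hτ₀)),
    by linarith [tanh_lt_one (τ₀ / 2)], fun φ hφ hφ_nonneg t r ht hr => ?_⟩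
  have hr_pos : 0 < r := (half_pos hτ₀).trans hr
  have h_integral : 0 ≤ ∫ l in max t r..t + r, φ l * √(sinh l) :=
    intervalIntegral.integral_nonneg (max_le (by linarith) (by linarith)) fun l hl =>
      mul_nonneg (hφ_nonneg l (ht.le.trans ((le_max_left t r).trans hl.1))) (sqrt_nonneg _)
  refine le_trans ?_ (solution_lower_bound_large_domain_general ht hr_pos
    (hφ.mono Icc_subset_Ici_self) fun x hx => hφ_nonneg x hx.1)
  gcongr
  exact tanh_le_tanh_of_le hr.le
end
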